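/- arXiv:1509.01818 — 2 statements merged into one kernel-verified Lean document; each statement's English description precedes it below -/
import Mathlib

section
/- Let $m \geq 1$ and $\boldsymbol{\sigma} = (\sigma_1, \dots, \sigma_m) \in \{0,1\}^m$. For $m$-bit numbers $\alpha = \sum_{j=1}^m \alpha_j 2^{-j}$ and $\beta = \sum_{j=1}^m \beta_j 2^{-j}$ with digits $\alpha_j, \beta_j \in \{0,1\}$ (and setting $\alpha_{m+1} = 0$), the local discrepancy of $\mathcal{H}_m(\boldsymbol{\sigma})$ satisfies $\Delta(\alpha, \beta) = \sum_{u=0}^{m-1} \|2^u \beta\| (-1)^{\sigma_{u+1}} (\alpha_{m-u} \oplus \alpha_{m+1-j(u)})$, where $j(u) = 0$ if $u = 0$ or if $\alpha_{m+1-j} = \beta_j \oplus \sigma_j$ for all $j = 1, \dots, u$, and $j(u) = \max\{j \leq u : \alpha_{m+1-j} \neq \beta_j \oplus \sigma_j\}$ otherwise. -/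
/-! The proof is by induction on the number `M` of digits that are read off. Write
`A j = a_{m-j}` for the digits of `α` in reversed order, so that `2^m α = ∑ A j 2^j`. A point of the
set is a bit vector `t`; its first coordinate is governed by the integer `lo t = ∑ t j 2^j`, its
second one by the integer `hi (t ⊕ σ) = ∑ (t ⊕ σ) j 2^(M-1-j)`.

Appending the bit `t M` makes it the leading bit of `lo` and the trailing bit of `hi`. Hence the
number of points in the box satisfies a recursion (`cntN_succ`) whose only other ingredient is
whether the unique `t` with `hi (t ⊕ σ) = hi b`, namely `t = b ⊕ σ`, satisfies `lo t < lo A`. This is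
decided by the last index at which `A` and `b ⊕ σ` differ: the answer is the digit of `A` at that
index (`cntE_eq`), which is the quantity `α_{m+1-j(u)}` of the theorem (`dig_jfun`).

On the other side, appending a digit `b M` to `β` changes `‖2^u β‖` by `± b_M 2^u / 2^(M+1)`, with
sign determined by the digit `b u` (`dnn_succ`). The resulting sum telescopes (`sum_sign`), and
both sides change by the same amount (`discrepancy_eq`). -/

open Finset

/-- Distance to the nearest integer. -/
noncomputable def dnn (x : ℝ) : ℝ := |x - round x|

/-- Real value of a bit. -/
def bitr (b : Bool) : ℝ := if b then 1 else 0

/-- First coordinate of a Hammersley point: t_m/2 + ... + t_1/2^m. -/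
noncomputable def hamX (m : ℕ) (t : Fin m → Bool) : ℝ :=
  ∑ j : Fin m, bitr (t j) / 2 ^ (m - j.val)

/-- Second coordinate of a shifted Hammersley point: s_1/2 + ... + s_m/2^m with s_j = t_j ⊕ σ_j. -/
noncomputable def hamY (m : ℕ) (σ t : Fin m → Bool) : ℝ :=
  ∑ j : Fin m, bitr (xor (t j) (σ j)) / 2 ^ (j.val + 1)

/-- Local discrepancy of the shifted Hammersley point set H_m(σ). -/
noncomputable def Δham (m : ℕ) (σ : Fin m → Bool) (α β : ℝ) : ℝ :=
  ((Finset.univ.filter (fun t : Fin m → Bool => hamX m t < α ∧ hamY m σ t < β)).card : ℝ)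
    - 2 ^ m * α * β

/-- digit i (1-based) of an m-digit vector, with value false outside 1..m. -/
def dig (m : ℕ) (a : Fin m → Bool) (i : ℕ) : Bool :=
  if h : 1 ≤ i ∧ i ≤ m then a ⟨i - 1, by omega⟩ else false

/-- The m-bit real number with binary digits a: ∑ a_j 2^{-j}. -/
noncomputable def mval (m : ℕ) (a : Fin m → Bool) : ℝ :=
  ∑ j : Fin m, bitr (a j) / 2 ^ (j.val + 1)

/-- The index function j(u) associated with digits a of α, digits b of β, and shift τ. -/
def jfun (m : ℕ) (a b τ : Fin m → Bool) (u : ℕ) : ℕ :=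
  Nat.findGreatest (fun j => dig m a (m + 1 - j) ≠ xor (dig m b j) (dig m τ j)) u

/-- Smallest m-bit number ≥ α. -/
noncomputable def upm (m : ℕ) (α : ℝ) : ℝ := (⌈2 ^ m * α⌉ : ℝ) / 2 ^ m

/-- Local discrepancy of the symmetrized Hammersley point set H_m(σ) ∪ H_m(σ*) (multiset union). -/
noncomputable def Δsym (m : ℕ) (σ : Fin m → Bool) (α β : ℝ) : ℝ :=
  (((Finset.univ.filter (fun t : Fin m → Bool => hamX m t < α ∧ hamY m σ t < β)).card : ℝ)
    + ((Finset.univ.filter (fun t : Fin m → Bool =>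
        hamX m t < α ∧ hamY m (fun j => !(σ j)) t < β)).card : ℝ))
    - 2 ^ (m + 1) * α * β


/-! ### Integer coordinates of the points -/

/-- Numerical value of a bit, as a natural number. -/
def bitn (b : Bool) : ℕ := if b then 1 else 0

/-- The integer whose binary digits are `t`, least significant digit first. -/
def lo (m : ℕ) (t : Fin m → Bool) : ℕ := ∑ j : Fin m, bitn (t j) * 2 ^ j.val

/-- The integer whose binary digits are `t`, most significant digit first. -/
def hi (m : ℕ) (t : Fin m → Bool) : ℕ := ∑ j : Fin m, bitn (t j) * 2 ^ (m - 1 - j.val)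

/-- The first `m` entries of a bit sequence. -/
def res (A : ℕ → Bool) (m : ℕ) : Fin m → Bool := fun j => A j.val

/-- Digitwise sum modulo 2 of `t` and the first `m` entries of `σ`. -/
def shf (σ : ℕ → Bool) (m : ℕ) (t : Fin m → Bool) : Fin m → Bool := fun j => xor (t j) (σ j.val)

/-- Number of points in the box: `lo t < lo A` and `hi (t ⊕ σ) < hi b`. -/
def cntN (A b σ : ℕ → Bool) (m : ℕ) : ℕ :=
  ∑ t : Fin m → Bool,
    if lo m t < lo m (res A m) ∧ hi m (shf σ m t) < hi m (res b m) then 1 else 0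

/-- Number of points with `lo t < lo A` lying on the upper edge `hi (t ⊕ σ) = hi b`. -/
def cntE (A b σ : ℕ → Bool) (m : ℕ) : ℕ :=
  ∑ t : Fin m → Bool,
    if lo m t < lo m (res A m) ∧ hi m (shf σ m t) = hi m (res b m) then 1 else 0

/-- The digit `A j` at the last index `j < u` with `A j ≠ b j ⊕ σ j`, and `false` if there is
no such index. -/
def lastDiff (A b σ : ℕ → Bool) : ℕ → Bool
  | 0 => false
  | u + 1 => if A u = xor (b u) (σ u) then lastDiff A b σ u else A u

lemma lo_succ (m : ℕ) (t : Fin (m + 1) → Bool) :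
    lo (m + 1) t = lo m (fun j => t j.castSucc) + bitn (t (Fin.last m)) * 2 ^ m := by
  simp [lo, Fin.sum_univ_castSucc]

lemma hi_succ (m : ℕ) (t : Fin (m + 1) → Bool) :
    hi (m + 1) t = 2 * hi m (fun j => t j.castSucc) + bitn (t (Fin.last m)) := by
  simp only [hi, Fin.sum_univ_castSucc, Finset.mul_sum]
  congr 1
  · refine Finset.sum_congr rfl fun j _ => ?_
    have h : m + 1 - 1 - (j.castSucc : Fin (m + 1)).val = (m - 1 - j.val) + 1 := by
      have := j.isLt
      simp only [Fin.val_castSucc]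
      omega
    rw [h, pow_succ]
    ring
  · simp

lemma lo_lt (m : ℕ) (t : Fin m → Bool) : lo m t < 2 ^ m := by
  induction m with
  | zero => simp [lo]
  | succ m ih =>
    rw [lo_succ, pow_succ]
    have := ih (fun j => t j.castSucc)
    cases t (Fin.last m) <;> simp [bitn] <;> omega

lemma lo_res_succ (A : ℕ → Bool) (m : ℕ) :
    lo (m + 1) (res A (m + 1)) = lo m (res A m) + bitn (A m) * 2 ^ m := by
  rw [lo_succ]; rfl

lemma hi_res_succ (A : ℕ → Bool) (m : ℕ) :
    hi (m + 1) (res A (m + 1)) = 2 * hi m (res A m) + bitn (A m) := by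
  rw [hi_succ]; rfl

lemma lo_snoc (m : ℕ) (t : Fin m → Bool) (x : Bool) :
    lo (m + 1) (Fin.snoc t x : Fin (m + 1) → Bool) = lo m t + bitn x * 2 ^ m := by
  rw [lo_succ]
  simp [Fin.snoc_castSucc, Fin.snoc_last]

lemma hi_snoc (σ : ℕ → Bool) (m : ℕ) (t : Fin m → Bool) (x : Bool) :
    hi (m + 1) (shf σ (m + 1) (Fin.snoc t x : Fin (m + 1) → Bool))
      = 2 * hi m (shf σ m t) + bitn (xor x (σ m)) := by
  rw [hi_succ]
  simp only [shf, Fin.snoc_castSucc, Fin.snoc_last, Fin.val_castSucc, Fin.val_last]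
  rfl

lemma sum_snoc (m : ℕ) (f : (Fin (m + 1) → Bool) → ℕ) :
    ∑ t, f t = ∑ t : Fin m → Bool, (f (Fin.snoc t false) + f (Fin.snoc t true)) := by
  rw [← (Fin.snocEquiv fun _ : Fin (m + 1) => Bool).sum_comp f, Fintype.sum_prod_type,
    Fintype.sum_bool, add_comm, ← Finset.sum_add_distrib]
  rfl

/-! ### Counting points in a box -/

lemma cnt_eq_one (b σ : ℕ → Bool) (m : ℕ) :
    (∑ t : Fin m → Bool, if hi m (shf σ m t) = hi m (res b m) then 1 else 0) = 1 := by
  induction m with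
  | zero => simp [hi]
  | succ m ih =>
    rw [sum_snoc]
    refine Eq.trans ?_ ih
    refine Finset.sum_congr rfl fun t _ => ?_
    simp only [hi_snoc, hi_res_succ]
    cases b m <;> cases σ m <;> simp [bitn] <;> omega

lemma cnt_lt (b σ : ℕ → Bool) (m : ℕ) :
    (∑ t : Fin m → Bool, if hi m (shf σ m t) < hi m (res b m) then 1 else 0)
      = hi m (res b m) := by
  induction m with
  | zero => simp [hi]
  | succ m ih =>
    have hrhs : hi (m + 1) (res b (m + 1)) = ∑ t : Fin m → Bool,
        (2 * (if hi m (shf σ m t) < hi m (res b m) then 1 else 0)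
          + bitn (b m) * (if hi m (shf σ m t) = hi m (res b m) then 1 else 0)) := by
      rw [Finset.sum_add_distrib, ← Finset.mul_sum, ← Finset.mul_sum, ih, cnt_eq_one,
        hi_res_succ, mul_one]
    rw [sum_snoc]
    refine Eq.trans ?_ hrhs.symm
    refine Finset.sum_congr rfl fun t _ => ?_
    simp only [hi_snoc, hi_res_succ]
    cases b m <;> cases σ m <;> simp [bitn] <;> (try split_ifs) <;> omega

/-- The point on the upper edge is `t = b ⊕ σ`, and it is compared with `A` at the last index where
the two differ. -/
lemma cntE_eq (A b σ : ℕ → Bool) (m : ℕ) : cntE A b σ m = bitn (lastDiff A b σ m) := by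
  induction m with
  | zero => simp [cntE, lo, lastDiff, bitn]
  | succ m ih =>
    have key : cntE A b σ (m + 1)
        = if A m = xor (b m) (σ m) then cntE A b σ m else bitn (A m) := by
      have hone : bitn (A m) = ∑ t : Fin m → Bool,
          bitn (A m) * (if hi m (shf σ m t) = hi m (res b m) then 1 else 0) := by
        rw [← Finset.mul_sum, cnt_eq_one, mul_one]
      rw [hone]
      unfold cntE
      rw [sum_snoc, ← Finset.sum_ite_irrel]
      refine Finset.sum_congr rfl fun t _ => ?_
      have h1 := lo_lt m t
      have h2 := lo_lt m (res A m)
      simp only [hi_snoc, hi_res_succ, lo_snoc, lo_res_succ]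
      generalize 2 ^ m = p at *
      cases b m <;> cases σ m <;> cases A m <;> simp [bitn] <;> (try split_ifs) <;> omega
    rw [key, ih, lastDiff]
    split_ifs <;> rfl

/-- If `A m = 0`, a point in the box must have `t m = 0`. If `A m = 1`, every `t` with `t m = 0`
satisfies the first condition, while those with `t m = 1` are subject to both conditions. In either
case the appended digit of `b` matters only on the edge `hi (t ⊕ σ) = hi b`. -/
lemma cntN_succ (A b σ : ℕ → Bool) (m : ℕ) :
    cntN A b σ (m + 1) = cntN A b σ m
      + bitn (b m) * bitn (xor (A m) (!(σ m))) * bitn (lastDiff A b σ m)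
      + bitn (A m) * (hi m (res b m) + bitn (b m) * bitn (!(σ m))) := by
  have hrhs : hi m (res b m) + bitn (b m) * bitn (!(σ m)) = ∑ t : Fin m → Bool,
      ((if hi m (shf σ m t) < hi m (res b m) then 1 else 0)
        + bitn (b m) * bitn (!(σ m))
          * (if hi m (shf σ m t) = hi m (res b m) then 1 else 0)) := by
    rw [Finset.sum_add_distrib, ← Finset.mul_sum, cnt_lt, cnt_eq_one, mul_one]
  rw [← cntE_eq, hrhs]
  unfold cntE cntN
  rw [sum_snoc, Finset.mul_sum, Finset.mul_sum, ← Finset.sum_add_distrib,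
    ← Finset.sum_add_distrib]
  refine Finset.sum_congr rfl fun t _ => ?_
  have h1 := lo_lt m t
  have h2 := lo_lt m (res A m)
  simp only [hi_snoc, hi_res_succ, lo_snoc, lo_res_succ]
  generalize 2 ^ m = p at *
  cases b m <;> cases σ m <;> cases A m <;> simp [bitn] <;> (try split_ifs) <;> omega

/-! ### Distance of `2^u β` to the nearest integer -/

/-- The real number with binary digits `b 0, …, b (M-1)` after the binary point. -/
noncomputable def bval (b : ℕ → Bool) (M : ℕ) : ℝ := ∑ j ∈ Finset.range M, bitr (b j) / 2 ^ (j + 1)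

lemma bval_succ (b : ℕ → Bool) (M : ℕ) :
    bval b (M + 1) = bval b M + bitr (b M) / 2 ^ (M + 1) := by
  rw [bval, Finset.sum_range_succ, bval]

lemma bitr_eq (x : Bool) : bitr x = (bitn x : ℝ) := by cases x <;> simp [bitr, bitn]

lemma hi_res_eq (b : ℕ → Bool) (M : ℕ) : (hi M (res b M) : ℝ) = 2 ^ M * bval b M := by
  induction M with
  | zero => simp [hi, bval]
  | succ M ih =>
    rw [hi_res_succ, bval_succ, bitr_eq]
    push_cast
    rw [ih]
    field_simp
    ring

lemma dnn_half (n : ℤ) (x : Bool) (h : ℝ) (h0 : 0 ≤ h) (h1 : h < 1 / 2) :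
    dnn (n + bitr x / 2 + h) = if x then 1 / 2 - h else h := by
  cases x
  · have hr : round ((n : ℝ) + bitr false / 2 + h) = n := by
      rw [round_eq, Int.floor_eq_iff]
      simp only [bitr]
      constructor <;> norm_num <;> linarith
    rw [dnn, hr]
    simp [bitr, abs_of_nonneg h0]
  · have hr : round ((n : ℝ) + bitr true / 2 + h) = n + 1 := by
      rw [round_eq, Int.floor_eq_iff]
      simp only [bitr]
      push_cast
      constructor <;> norm_num <;> linarith
    rw [dnn, hr]
    simp only [bitr]
    push_cast
    rw [abs_of_nonpos] <;> norm_num <;> linarith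

/-- The binary expansion of `2^u β`: an integer, the digit `b u` with weight `1/2`, and a tail. -/
lemma bval_shift (b : ℕ → Bool) (u M : ℕ) (hM : u + 1 ≤ M) :
    ∃ (n : ℤ) (h : ℝ), 0 ≤ h ∧ h + 2 ^ u / 2 ^ M ≤ 1 / 2 ∧
      2 ^ u * bval b M = n + bitr (b u) / 2 + h := by
  induction M, hM using Nat.le_induction with
  | base =>
    refine ⟨hi u (res b u), 0, le_rfl, ?_, ?_⟩
    · rw [pow_succ]; field_simp; norm_num
    · rw [bval_succ, Int.cast_natCast, hi_res_eq, pow_succ]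
      field_simp
      ring
  | succ M hM ih =>
    obtain ⟨n, h, h0, h1, h2⟩ := ih
    have hp : (0 : ℝ) < 2 ^ u / 2 ^ M := by positivity
    have hs : (2 : ℝ) ^ u / 2 ^ (M + 1) = 2 ^ u / 2 ^ M / 2 := by
      rw [pow_succ]; field_simp
    refine ⟨n, h + bitr (b M) * (2 ^ u / 2 ^ (M + 1)), ?_, ?_, ?_⟩
    · cases b M <;> simp only [bitr] <;> norm_num <;> positivity
    · rw [hs]
      cases b M <;> simp only [bitr] <;> norm_num <;> linarith
    · rw [bval_succ, mul_add, h2]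
      ring

/-- Effect on `‖2^u β‖` of appending a binary digit to `β`. -/
lemma dnn_succ (b : ℕ → Bool) (u M : ℕ) (hM : u < M) :
    dnn (2 ^ u * bval b (M + 1)) = dnn (2 ^ u * bval b M)
      + bitr (b M) * (if b u then -1 else 1) * (2 ^ u / 2 ^ (M + 1)) := by
  obtain ⟨n, h, h0, h1, h2⟩ := bval_shift b u M hM
  have hp : (0 : ℝ) < 2 ^ u / 2 ^ M := by positivity
  have hs : (2 : ℝ) ^ u / 2 ^ (M + 1) = 2 ^ u / 2 ^ M / 2 := by
    rw [pow_succ]; field_simp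
  have h3 : 2 ^ u * bval b (M + 1)
      = n + bitr (b u) / 2 + (h + bitr (b M) * (2 ^ u / 2 ^ (M + 1))) := by
    rw [bval_succ, mul_add, h2]
    ring
  rw [h3, h2, dnn_half _ _ _ h0 (by linarith), dnn_half]
  · split_ifs <;> ring
  · cases b M <;> simp only [bitr] <;> norm_num <;> positivity
  · rw [hs]
    cases b M <;> simp only [bitr] <;> norm_num <;> linarith

lemma dnn_top (b : ℕ → Bool) (M : ℕ) : dnn (2 ^ M * bval b (M + 1)) = bitr (b M) / 2 := by
  have h : 2 ^ M * bval b (M + 1) = (hi M (res b M) : ℤ) + bitr (b M) / 2 + 0 := by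
    rw [bval_succ, Int.cast_natCast, hi_res_eq, pow_succ]
    field_simp
    ring
  rw [h, dnn_half _ _ _ le_rfl (by norm_num)]
  cases b M <;> simp [bitr]

/-! ### The formula for digit sequences -/

/-- The telescoping sum behind the change of the right-hand side when a digit is appended. -/
lemma sum_sign (A b σ : ℕ → Bool) (M : ℕ) :
    ∑ u ∈ Finset.range M, (if b u then (-1 : ℝ) else 1) * 2 ^ u
        * (-1 : ℝ) ^ (if σ u then 1 else 0) * bitr (xor (A u) (lastDiff A b σ u))
      = 2 ^ M * bitr (lastDiff A b σ M) - lo M (res A M) := by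
  induction M with
  | zero => simp [lastDiff, bitr, lo]
  | succ M ih =>
    rw [Finset.sum_range_succ, ih, lo_res_succ, lastDiff]
    push_cast
    rw [pow_succ]
    cases b M <;> cases σ M <;> cases A M <;> cases lastDiff A b σ M <;>
      simp [bitn, bitr] <;> ring

/-- The discrepancy formula in terms of digit sequences. -/
lemma discrepancy_eq (A b σ : ℕ → Bool) (M : ℕ) :
    (cntN A b σ M : ℝ) - lo M (res A M) * bval b M
      = ∑ u ∈ Finset.range M, dnn (2 ^ u * bval b M) * (-1 : ℝ) ^ (if σ u then 1 else 0)
          * bitr (xor (A u) (lastDiff A b σ u)) := by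
  induction M with
  | zero => simp [cntN, lo, bval]
  | succ M ih =>
    have hsum : ∑ u ∈ Finset.range M, dnn (2 ^ u * bval b (M + 1))
          * (-1 : ℝ) ^ (if σ u then 1 else 0) * bitr (xor (A u) (lastDiff A b σ u))
        = ((cntN A b σ M : ℝ) - lo M (res A M) * bval b M)
          + bitr (b M) / 2 ^ (M + 1)
            * (2 ^ M * bitr (lastDiff A b σ M) - lo M (res A M)) := by
      rw [ih, ← sum_sign, Finset.mul_sum, ← Finset.sum_add_distrib]
      refine Finset.sum_congr rfl fun u hu => ?_
      rw [dnn_succ b u M (Finset.mem_range.1 hu)]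
      ring
    rw [Finset.sum_range_succ, hsum, dnn_top, cntN_succ, lo_res_succ, bval_succ]
    push_cast
    rw [hi_res_eq, pow_succ]
    cases b M <;> cases σ M <;> cases A M <;> cases lastDiff A b σ M <;>
      simp [bitn, bitr] <;> field_simp <;> ring

/-! ### Translation to the shifted Hammersley point set -/

/-- `lastDiff` is the digit of `α` selected by the index `j(u)`. For `j(u) = 0` both sides are
`false`, because `dig` vanishes at the index `m + 1`. -/
lemma dig_jfun (m : ℕ) (σ a b : Fin m → Bool) (u : ℕ) :
    dig m a (m + 1 - jfun m a b σ u)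
      = lastDiff (fun j => dig m a (m - j)) (fun j => dig m b (j + 1))
          (fun j => dig m σ (j + 1)) u := by
  induction u with
  | zero => simp [jfun, dig, lastDiff]
  | succ u ih =>
    rw [lastDiff, ← ih]
    unfold jfun
    rw [Nat.findGreatest_succ]
    have h : m + 1 - (u + 1) = m - u := by omega
    simp only [h]
    by_cases h1 : dig m a (m - u) = xor (dig m b (u + 1)) (dig m σ (u + 1))
    · rw [if_neg (not_not.2 h1), if_pos h1]
    · rw [if_pos h1, if_neg h1, h]

lemma mval_eq_lo (m : ℕ) (a : Fin m → Bool) :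
    mval m a = lo m (res (fun j => dig m a (m - j)) m) / 2 ^ m := by
  rw [mval, lo, ← Equiv.sum_comp Fin.revPerm]
  push_cast
  rw [Finset.sum_div]
  refine Finset.sum_congr rfl fun j _ => ?_
  have hj := j.isLt
  have h1 : res (fun j => dig m a (m - j)) m j = a j.rev := by
    have : 1 ≤ m - j.val ∧ m - j.val ≤ m := by omega
    simp only [res, dig, this, and_self, dite_true]
    congr 1
  have h2 : (2 : ℝ) ^ m = 2 ^ (m - (j.val + 1) + 1) * 2 ^ j.val := by
    rw [← pow_add]; congr 1; omega
  rw [h1, bitr_eq, Fin.revPerm_apply, Fin.val_rev, h2]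
  field_simp

lemma hamX_eq_lo (m : ℕ) (t : Fin m → Bool) : hamX m t = lo m t / 2 ^ m := by
  rw [hamX, lo]
  push_cast
  rw [Finset.sum_div]
  refine Finset.sum_congr rfl fun j _ => ?_
  have hj := j.isLt
  have h2 : (2 : ℝ) ^ m = 2 ^ (m - j.val) * 2 ^ j.val := by
    rw [← pow_add]; congr 1; omega
  rw [bitr_eq, h2]
  field_simp

lemma mval_eq_hi (m : ℕ) (s : Fin m → Bool) : mval m s = hi m s / 2 ^ m := by
  rw [mval, hi]
  push_cast
  rw [Finset.sum_div]
  refine Finset.sum_congr rfl fun j _ => ?_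
  have hj := j.isLt
  have h2 : (2 : ℝ) ^ m = 2 ^ (j.val + 1) * 2 ^ (m - 1 - j.val) := by
    rw [← pow_add]; congr 1; omega
  rw [bitr_eq, h2]
  field_simp

lemma res_dig (m : ℕ) (b : Fin m → Bool) : res (fun j => dig m b (j + 1)) m = b := by
  funext j
  simp [res, dig]

theorem stmt5 (m : ℕ) (hm : 1 ≤ m) (σ a b : Fin m → Bool) :
    Δham m σ (mval m a) (mval m b)
      = ∑ u ∈ Finset.range m,
          dnn (2 ^ u * mval m b) * (-1 : ℝ) ^ (if dig m σ (u + 1) then 1 else 0)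
            * bitr (xor (dig m a (m - u)) (dig m a (m + 1 - jfun m a b σ u))) := by
  have hp : (0 : ℝ) < 2 ^ m := by positivity
  have hb : mval m b = bval (fun j => dig m b (j + 1)) m := by
    rw [mval_eq_hi, div_eq_iff hp.ne', mul_comm, ← hi_res_eq, res_dig]
  have hcount : (Finset.univ.filter
      (fun t : Fin m → Bool => hamX m t < mval m a ∧ hamY m σ t < mval m b)).card
      = cntN (fun j => dig m a (m - j)) (fun j => dig m b (j + 1))
          (fun j => dig m σ (j + 1)) m := by
    rw [cntN, Finset.card_filter]
    refine Finset.sum_congr rfl fun t _ => ?_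
    have hY : hamY m σ t = mval m (shf (fun j => dig m σ (j + 1)) m t) := by
      refine Finset.sum_congr rfl fun j _ => ?_
      rw [shf, show dig m σ (j.val + 1) = σ j from congrFun (res_dig m σ) j]
    rw [hY, hamX_eq_lo, mval_eq_lo, mval_eq_hi, mval_eq_hi]
    simp only [div_lt_div_iff_of_pos_right hp, Nat.cast_lt, res_dig]
  simp only [dig_jfun]
  rw [Δham, hcount, hb, ← discrepancy_eq, mval_eq_lo, mul_div_cancel₀ _ hp.ne']
end

section
/- Let $m \geq 1$, $\boldsymbol{\sigma} \in \{0,1\}^m$, and let $l$ be the number of indices $i$ with $\sigma_i = 0$. Let $\Delta_1$ and $\Delta_2$ denote the local discrepancies of $\mathcal{H}_m(\boldsymbol{\sigma})$ and $\mathcal{H}_m(\boldsymbol{\sigma}^*)$ respectively. Then $\frac{1}{2^{2m}} \sum_{\alpha, \beta \in \mathbb{Q}^*(2^m)} \Delta_1(\alpha, \beta)\Delta_2(\alpha, \beta) = -\frac{m^2}{64} - \frac{l^2}{16} + \frac{lm}{16} - \frac{m}{192} - \frac{5}{144} - \frac{1}{9 \cdot 2^{2m+2}}$. -/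
/-!
The proof is an induction on the number of digits. Scaling both axes by `2 ^ m` turns the local
discrepancy at `(a / 2 ^ m, b / 2 ^ m)` into `dsc m σ a b = cnt m σ a b - a * b / 2 ^ m`, where
`cnt` counts points with natural number coordinates. Appending a last digit to `t` sends a point
`(x, y)` to `(x + e * 2 ^ m, 2 * y + s)`, and this expresses `dsc (m + 1)` at
`(a, 2 * c)`, `(a + 2 ^ m, 2 * c)`, `(a, 2 * c + 1)`, `(a + 2 ^ m, 2 * c + 1)` through `dsc m` at
`(a, c)` and `(a, c + 1)`, up to an explicit term `± u` or `± v` with `u = a / 2 ^ (m + 1)` and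
`v = 1 / 2 - u`.

Let `S` be the sum of the products `Δ₁ Δ₂` over the grid, `P` the sum of the neighbouring products
`Δ₁(a, c + 1) Δ₂(a, c) + Δ₁(a, c) Δ₂(a, c + 1)`, and `L₁`, `L₂` the sums of `Δ₁`, `Δ₂`. Since
`u + v = 1 / 2` does not depend on `a` and `Δ` vanishes at `c = 0` and `c = 2 ^ m`, these sums obey a
closed recursion: if the new digit has `σ = 0`, then

* `L₁' = 4 L₁ + 4 ^ m / 2` and `L₂' = 4 L₂ - 4 ^ m / 2`,
* `S' = 2 S + P + (L₂ - L₁) / 2 - (2 * 4 ^ m + 1) / 12`,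
* `P' = 2 P + 4 S + (L₂ - L₁)`,

and for `σ = 1` the indices `1` and `2` trade places (`lin_succ_false`, `lin_succ_true`,
`prodSum_succ`, `nbrSum_succ`). Solving it in terms of `imb σ = 2 l - m` gives the result
(`prodSum_compl`).
-/

open Finset

/-! ### Integer coordinates and the counting function -/

/-- First coordinate of a Hammersley point, scaled by `2 ^ m`. -/
def natX (m : ℕ) (t : Fin m → Bool) : ℕ := ∑ j : Fin m, (t j).toNat * 2 ^ j.val

/-- Second coordinate of a shifted Hammersley point, scaled by `2 ^ m`. -/
def natY (m : ℕ) (σ t : Fin m → Bool) : ℕ :=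
  ∑ j : Fin m, (xor (t j) (σ j)).toNat * 2 ^ (m - 1 - j.val)

/-- Number of scaled points in `[0, a) × [0, b)`. -/
def cnt (m : ℕ) (σ : Fin m → Bool) (a b : ℕ) : ℕ :=
  (univ.filter (fun t : Fin m → Bool => natX m t < a ∧ natY m σ t < b)).card

/-- Local discrepancy at the grid point `(a / 2 ^ m, b / 2 ^ m)`. -/
noncomputable def dsc (m : ℕ) (σ : Fin m → Bool) (a b : ℕ) : ℝ :=
  (cnt m σ a b : ℝ) - (a : ℝ) * b / 2 ^ m

lemma bitr_eq_s8 (b : Bool) : bitr b = (b.toNat : ℝ) := by cases b <;> simp [bitr]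

lemma hamX_eq (m : ℕ) (t : Fin m → Bool) : hamX m t = (natX m t : ℝ) / 2 ^ m := by
  simp only [hamX, natX, Nat.cast_sum, Finset.sum_div, bitr_eq_s8]
  refine Finset.sum_congr rfl fun j _ => ?_
  have h : (2 : ℝ) ^ m = 2 ^ (m - j.val) * 2 ^ j.val := by
    rw [← pow_add]; congr 1; omega
  rw [h]; push_cast; field_simp

lemma hamY_eq (m : ℕ) (σ t : Fin m → Bool) : hamY m σ t = (natY m σ t : ℝ) / 2 ^ m := by
  simp only [hamY, natY, Nat.cast_sum, Finset.sum_div, bitr_eq_s8]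
  refine Finset.sum_congr rfl fun j _ => ?_
  have h : (2 : ℝ) ^ m = 2 ^ (m - 1 - j.val) * 2 ^ (j.val + 1) := by
    rw [← pow_add]; congr 1; omega
  rw [h]; push_cast; field_simp

lemma Δham_eq (m : ℕ) (σ : Fin m → Bool) (a b : ℕ) :
    Δham m σ ((a : ℝ) / 2 ^ m) ((b : ℝ) / 2 ^ m) = dsc m σ a b := by
  have h2 : (0 : ℝ) < 2 ^ m := by positivity
  unfold Δham dsc cnt
  congr 1
  · simp only [hamX_eq, hamY_eq, div_lt_div_iff_of_pos_right h2, Nat.cast_lt]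
  · field_simp

lemma natX_snoc (m : ℕ) (t : Fin m → Bool) (e : Bool) :
    natX (m + 1) (Fin.snoc t e) = natX m t + e.toNat * 2 ^ m := by
  simp [natX, Fin.sum_univ_castSucc]

lemma natY_snoc (m : ℕ) (σ : Fin (m + 1) → Bool) (t : Fin m → Bool) (e : Bool) :
    natY (m + 1) σ (Fin.snoc t e)
      = 2 * natY m (Fin.init σ) t + (xor e (σ (Fin.last m))).toNat := by
  simp only [natY, Fin.sum_univ_castSucc, Fin.snoc_castSucc, Fin.snoc_last, Finset.mul_sum]
  congr 1
  · refine Finset.sum_congr rfl fun j _ => ?_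
    have h : m + 1 - 1 - (Fin.castSucc j).val = (m - 1 - j.val) + 1 := by
      simp; omega
    rw [h, pow_succ]; simp only [Fin.init]; ring
  · simp

lemma natX_lt (m : ℕ) (t : Fin m → Bool) : natX m t < 2 ^ m := by
  induction m with
  | zero => simp [natX]
  | succ m ih =>
    rw [← Fin.snoc_init_self t, natX_snoc]
    have := ih (Fin.init t)
    cases t (Fin.last m) <;> simp [pow_succ] <;> omega

/-- The count at level `m + 1`, split according to the last digit. -/
lemma cnt_succ (m : ℕ) (σ : Fin (m + 1) → Bool) (a b : ℕ) :
    cnt (m + 1) σ a b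
      = cnt m (Fin.init σ) a ((b + 1 - (σ (Fin.last m)).toNat) / 2)
        + cnt m (Fin.init σ) (a - 2 ^ m) ((b + 1 - (!σ (Fin.last m)).toNat) / 2) := by
  simp only [cnt, Finset.card_filter]
  rw [← (Fin.snocEquiv (fun _ : Fin (m + 1) => Bool)).sum_comp, Fintype.sum_prod_type,
    Fintype.sum_bool, add_comm]
  simp only [Fin.snocEquiv, Equiv.coe_fn_mk, natX_snoc, natY_snoc]
  congr 1 <;> refine Finset.sum_congr rfl fun t _ => if_congr ?_ rfl rfl <;>
    cases σ (Fin.last m) <;> simp <;> omega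

lemma cnt_of_ge (m : ℕ) (σ : Fin m → Bool) (a b : ℕ) (h : 2 ^ m ≤ a) :
    cnt m σ a b = cnt m σ (2 ^ m) b := by
  unfold cnt
  congr 1
  ext t
  have := natX_lt m t
  simp
  omega

lemma cnt_zero_left (m : ℕ) (σ : Fin m → Bool) (b : ℕ) : cnt m σ 0 b = 0 := by simp [cnt]

lemma cnt_zero_right (m : ℕ) (σ : Fin m → Bool) (a : ℕ) : cnt m σ a 0 = 0 := by simp [cnt]

lemma cnt_full_left (m : ℕ) (σ : Fin m → Bool) (b : ℕ) (hb : b ≤ 2 ^ m) :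
    cnt m σ (2 ^ m) b = b := by
  induction m generalizing b with
  | zero =>
    have : b = 0 ∨ b = 1 := by simp at hb; omega
    rcases this with rfl | rfl <;> simp [cnt, natX, natY]
  | succ m ih =>
    rw [pow_succ] at hb
    have e : 2 ^ (m + 1) - 2 ^ m = 2 ^ m := by rw [pow_succ]; omega
    rw [cnt_succ, e, cnt_of_ge m _ (2 ^ (m + 1)) _ (by rw [pow_succ]; omega)]
    cases σ (Fin.last m) <;> simp <;> rw [ih _ _ (by omega), ih _ _ (by omega)] <;> omega

lemma cnt_full_right (m : ℕ) (σ : Fin m → Bool) (a : ℕ) (ha : a ≤ 2 ^ m) :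
    cnt m σ a (2 ^ m) = a := by
  induction m generalizing a with
  | zero =>
    have : a = 0 ∨ a = 1 := by simp at ha; omega
    rcases this with rfl | rfl <;> simp [cnt, natX, natY]
  | succ m ih =>
    rw [pow_succ] at ha
    have e0 : (2 ^ (m + 1) + 1 - 0) / 2 = 2 ^ m := by rw [pow_succ]; omega
    have e1 : (2 ^ (m + 1) + 1 - 1) / 2 = 2 ^ m := by rw [pow_succ]; omega
    have key : cnt m (Fin.init σ) a (2 ^ m) + cnt m (Fin.init σ) (a - 2 ^ m) (2 ^ m) = a := by
      rcases le_total a (2 ^ m) with h | h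
      · rw [Nat.sub_eq_zero_of_le h, cnt_zero_left, ih _ _ h]; rfl
      · rw [cnt_of_ge _ _ _ _ h, ih _ _ le_rfl, ih _ _ (by omega)]; omega
    rw [cnt_succ]
    cases σ (Fin.last m) <;> simp only [Bool.toNat_false, Bool.toNat_true, Bool.not_false,
      Bool.not_true, e0, e1] <;> exact key

/-! ### Recursion for the local discrepancy -/

lemma dsc_zero_right (m : ℕ) (σ : Fin m → Bool) (a : ℕ) : dsc m σ a 0 = 0 := by
  simp [dsc, cnt_zero_right]

lemma dsc_zero_left (m : ℕ) (σ : Fin m → Bool) (b : ℕ) : dsc m σ 0 b = 0 := by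
  simp [dsc, cnt_zero_left]

lemma dsc_full_right (m : ℕ) (σ : Fin m → Bool) (a : ℕ) (ha : a ≤ 2 ^ m) :
    dsc m σ a (2 ^ m) = 0 := by
  simp [dsc, cnt_full_right m σ a ha]

lemma cnt_succ_lo (m : ℕ) (σ : Fin (m + 1) → Bool) (a b : ℕ) (ha : a < 2 ^ m) :
    cnt (m + 1) σ a b = cnt m (Fin.init σ) a ((b + 1 - (σ (Fin.last m)).toNat) / 2) := by
  rw [cnt_succ, Nat.sub_eq_zero_of_le ha.le, cnt_zero_left, add_zero]

lemma cnt_succ_hi (m : ℕ) (σ : Fin (m + 1) → Bool) (a b : ℕ) (hb : b ≤ 2 ^ (m + 1)) :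
    cnt (m + 1) σ (2 ^ m + a) b = (b + 1 - (σ (Fin.last m)).toNat) / 2
      + cnt m (Fin.init σ) a ((b + 1 - (!σ (Fin.last m)).toNat) / 2) := by
  rw [pow_succ] at hb
  rw [cnt_succ, Nat.add_sub_cancel_left, cnt_of_ge m _ _ _ (Nat.le_add_right _ _),
    cnt_full_left _ _ _ (by cases σ (Fin.last m) <;> simp <;> omega)]

lemma dsc_lo_even (m : ℕ) (σ : Fin (m + 1) → Bool) (a c : ℕ) (ha : a < 2 ^ m) :
    dsc (m + 1) σ a (2 * c) = dsc m (Fin.init σ) a c := by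
  have h : (2 * c + 1 - (σ (Fin.last m)).toNat) / 2 = c := by
    cases σ (Fin.last m) <;> simp <;> omega
  rw [dsc, dsc, cnt_succ_lo m σ a _ ha, h]
  push_cast; rw [pow_succ]; field_simp

lemma dsc_hi_even (m : ℕ) (σ : Fin (m + 1) → Bool) (a c : ℕ) (hc : c ≤ 2 ^ m) :
    dsc (m + 1) σ (2 ^ m + a) (2 * c) = dsc m (Fin.init σ) a c := by
  have h (s : Bool) : (2 * c + 1 - s.toNat) / 2 = c := by
    cases s <;> simp <;> omega
  rw [dsc, dsc, cnt_succ_hi m σ a _ (by rw [pow_succ]; omega), h, h]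
  push_cast; rw [pow_succ]; field_simp; ring

lemma dsc_lo_odd_false (m : ℕ) (σ : Fin (m + 1) → Bool) (a c : ℕ) (ha : a < 2 ^ m)
    (hσ : σ (Fin.last m) = false) :
    dsc (m + 1) σ a (2 * c + 1) = dsc m (Fin.init σ) a (c + 1) + a / 2 ^ (m + 1) := by
  have h : (2 * c + 1 + 1 - 0) / 2 = c + 1 := by omega
  rw [dsc, dsc, cnt_succ_lo m σ a _ ha, hσ, Bool.toNat_false, h]
  push_cast; rw [pow_succ]; field_simp; ring

lemma dsc_lo_odd_true (m : ℕ) (σ : Fin (m + 1) → Bool) (a c : ℕ) (ha : a < 2 ^ m)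
    (hσ : σ (Fin.last m) = true) :
    dsc (m + 1) σ a (2 * c + 1) = dsc m (Fin.init σ) a c - a / 2 ^ (m + 1) := by
  have h : (2 * c + 1 + 1 - 1) / 2 = c := by omega
  rw [dsc, dsc, cnt_succ_lo m σ a _ ha, hσ, Bool.toNat_true, h]
  push_cast; rw [pow_succ]; field_simp; ring

lemma dsc_hi_odd_false (m : ℕ) (σ : Fin (m + 1) → Bool) (a c : ℕ) (hc : c < 2 ^ m)
    (hσ : σ (Fin.last m) = false) :
    dsc (m + 1) σ (2 ^ m + a) (2 * c + 1)
      = dsc m (Fin.init σ) a c + (1 / 2 - a / 2 ^ (m + 1)) := by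
  have h0 : (2 * c + 1 + 1 - 0) / 2 = c + 1 := by omega
  have h1 : (2 * c + 1 + 1 - 1) / 2 = c := by omega
  rw [dsc, dsc, cnt_succ_hi m σ a _ (by rw [pow_succ]; omega), hσ, Bool.not_false,
    Bool.toNat_true, Bool.toNat_false, h0, h1]
  push_cast; rw [pow_succ]; field_simp; ring

lemma dsc_hi_odd_true (m : ℕ) (σ : Fin (m + 1) → Bool) (a c : ℕ) (hc : c < 2 ^ m)
    (hσ : σ (Fin.last m) = true) :
    dsc (m + 1) σ (2 ^ m + a) (2 * c + 1)
      = dsc m (Fin.init σ) a (c + 1) - (1 / 2 - a / 2 ^ (m + 1)) := by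
  have h0 : (2 * c + 1 + 1 - 0) / 2 = c + 1 := by omega
  have h1 : (2 * c + 1 + 1 - 1) / 2 = c := by omega
  rw [dsc, dsc, cnt_succ_hi m σ a _ (by rw [pow_succ]; omega), hσ, Bool.not_true,
    Bool.toNat_true, Bool.toNat_false, h0, h1]
  push_cast; rw [pow_succ]; field_simp; ring

/-! ### Recursions for the grid sums -/

/-- Sum of the local discrepancy over the grid. -/
noncomputable def lin (m : ℕ) (σ : Fin m → Bool) : ℝ :=
  ∑ a ∈ range (2 ^ m), ∑ c ∈ range (2 ^ m), dsc m σ a c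

/-- Sum over the grid of the products of two local discrepancies. -/
noncomputable def prodSum (m : ℕ) (σ τ : Fin m → Bool) : ℝ :=
  ∑ a ∈ range (2 ^ m), ∑ c ∈ range (2 ^ m), dsc m σ a c * dsc m τ a c

/-- Symmetrized sum over the grid of the products of two local discrepancies at vertically
neighbouring grid points. -/
noncomputable def nbrSum (m : ℕ) (σ τ : Fin m → Bool) : ℝ :=
  ∑ a ∈ range (2 ^ m), ∑ c ∈ range (2 ^ m),
    (dsc m σ a (c + 1) * dsc m τ a c + dsc m σ a c * dsc m τ a (c + 1))

lemma prodSum_comm (m : ℕ) (σ τ : Fin m → Bool) : prodSum m σ τ = prodSum m τ σ := by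
  simp only [prodSum, mul_comm]

lemma nbrSum_comm (m : ℕ) (σ τ : Fin m → Bool) : nbrSum m σ τ = nbrSum m τ σ := by
  unfold nbrSum
  refine Finset.sum_congr rfl fun a _ => Finset.sum_congr rfl fun c _ => ?_
  ring

lemma sum_range_two_mul_real (n : ℕ) (f : ℕ → ℝ) :
    ∑ b ∈ range (2 * n), f b = ∑ c ∈ range n, (f (2 * c) + f (2 * c + 1)) := by
  induction n with
  | zero => simp
  | succ n ih =>
    rw [Nat.mul_succ, Finset.sum_range_succ, Finset.sum_range_succ, ih, Finset.sum_range_succ]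
    ring

/-- A grid sum at level `m + 1`, folded onto the grid at level `m`. -/
lemma grid_succ (m : ℕ) (f : ℕ → ℕ → ℝ) :
    ∑ a ∈ range (2 ^ (m + 1)), ∑ b ∈ range (2 ^ (m + 1)), f a b
      = ∑ a ∈ range (2 ^ m), ∑ c ∈ range (2 ^ m), (f a (2 * c) + f a (2 * c + 1)
          + (f (2 ^ m + a) (2 * c) + f (2 ^ m + a) (2 * c + 1))) := by
  rw [show 2 ^ (m + 1) = 2 ^ m + 2 ^ m by ring, Finset.sum_range_add, ← Finset.sum_add_distrib]
  refine Finset.sum_congr rfl fun a _ => ?_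
  rw [← two_mul, sum_range_two_mul_real, sum_range_two_mul_real, ← Finset.sum_add_distrib]

lemma lin_succ_false (m : ℕ) (σ : Fin (m + 1) → Bool) (hσ : σ (Fin.last m) = false) :
    lin (m + 1) σ = 4 * lin m (Fin.init σ) + 4 ^ m / 2 := by
  have row (f : ℕ → ℝ) (u v : ℝ) (n : ℕ) :
      ∑ c ∈ range n, (f c + (f (c + 1) + u) + (f c + (f c + v)))
        = 4 * ∑ c ∈ range n, f c + n * (u + v) + (f n - f 0) := by
    induction n with
    | zero => simp
    | succ n ih =>
      simp only [Finset.sum_range_succ]; push_cast; linear_combination ih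
  have h : lin (m + 1) σ = ∑ a ∈ range (2 ^ m),
      (4 * (∑ c ∈ range (2 ^ m), dsc m (Fin.init σ) a c) + 2 ^ m / 2) := by
    rw [lin, grid_succ]
    refine Finset.sum_congr rfl fun a ha => ?_
    have ha := Finset.mem_range.1 ha
    have := row (dsc m (Fin.init σ) a) (a / 2 ^ (m + 1)) (1 / 2 - a / 2 ^ (m + 1)) (2 ^ m)
    rw [dsc_full_right _ _ _ ha.le, dsc_zero_right] at this
    push_cast at this
    refine Eq.trans (Finset.sum_congr rfl fun c hc => ?_) (this.trans (by ring))
    have hc := Finset.mem_range.1 hc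
    rw [dsc_lo_even m σ a c ha, dsc_hi_even m σ a c hc.le, dsc_lo_odd_false m σ a c ha hσ,
      dsc_hi_odd_false m σ a c hc hσ]
  rw [h, Finset.sum_add_distrib, ← Finset.mul_sum, Finset.sum_const, Finset.card_range, lin]
  rw [show (4 : ℝ) ^ m = 2 ^ m * 2 ^ m by rw [← mul_pow]; norm_num]
  simp; ring

lemma lin_succ_true (m : ℕ) (σ : Fin (m + 1) → Bool) (hσ : σ (Fin.last m) = true) :
    lin (m + 1) σ = 4 * lin m (Fin.init σ) - 4 ^ m / 2 := by
  have row (f : ℕ → ℝ) (u v : ℝ) (n : ℕ) :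
      ∑ c ∈ range n, (f c + (f c - u) + (f c + (f (c + 1) - v)))
        = 4 * ∑ c ∈ range n, f c - n * (u + v) + (f n - f 0) := by
    induction n with
    | zero => simp
    | succ n ih =>
      simp only [Finset.sum_range_succ]; push_cast; linear_combination ih
  have h : lin (m + 1) σ = ∑ a ∈ range (2 ^ m),
      (4 * (∑ c ∈ range (2 ^ m), dsc m (Fin.init σ) a c) - 2 ^ m / 2) := by
    rw [lin, grid_succ]
    refine Finset.sum_congr rfl fun a ha => ?_
    have ha := Finset.mem_range.1 ha
    have := row (dsc m (Fin.init σ) a) (a / 2 ^ (m + 1)) (1 / 2 - a / 2 ^ (m + 1)) (2 ^ m)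
    rw [dsc_full_right _ _ _ ha.le, dsc_zero_right] at this
    push_cast at this
    refine Eq.trans (Finset.sum_congr rfl fun c hc => ?_) (this.trans (by ring))
    have hc := Finset.mem_range.1 hc
    rw [dsc_lo_even m σ a c ha, dsc_hi_even m σ a c hc.le, dsc_lo_odd_true m σ a c ha hσ,
      dsc_hi_odd_true m σ a c hc hσ]
  rw [h, Finset.sum_sub_distrib, ← Finset.mul_sum, Finset.sum_const, Finset.card_range, lin]
  rw [show (4 : ℝ) ^ m = 2 ^ m * 2 ^ m by rw [← mul_pow]; norm_num]
  simp; ring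

/-- The sum of the squares of the corrections `u` and `v` over one level. -/
lemma sum_corrections (m : ℕ) :
    ∑ a ∈ range (2 ^ m), (2 : ℝ) ^ m *
      (((a : ℝ) / 2 ^ (m + 1)) ^ 2 + (1 / 2 - (a : ℝ) / 2 ^ (m + 1)) ^ 2)
      = (2 * 4 ^ m + 1) / 12 := by
  have gen (N : ℝ) (n : ℕ) : ∑ a ∈ range n, ((a : ℝ) ^ 2 + (N - a) ^ 2)
      = (n - 1) * n * (2 * n - 1) / 3 + n * N ^ 2 - N * n * (n - 1) := by
    induction n with
    | zero => simp
    | succ n ih => rw [Finset.sum_range_succ, ih]; push_cast; ring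
  have h := gen (2 ^ m) (2 ^ m)
  have e : ∀ a : ℕ, (2 : ℝ) ^ m *
      (((a : ℝ) / 2 ^ (m + 1)) ^ 2 + (1 / 2 - (a : ℝ) / 2 ^ (m + 1)) ^ 2)
      = (1 / (4 * 2 ^ m)) * ((a : ℝ) ^ 2 + (2 ^ m - a) ^ 2) := by
    intro a
    rw [pow_succ]; field_simp; ring
  simp only [e]
  rw [← Finset.mul_sum, h, show (4 : ℝ) ^ m = 2 ^ m * 2 ^ m by rw [← mul_pow]; norm_num]
  push_cast; field_simp; ring

lemma prodSum_succ (m : ℕ) (σ τ : Fin (m + 1) → Bool) (hσ : σ (Fin.last m) = false)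
    (hτ : τ (Fin.last m) = true) :
    prodSum (m + 1) σ τ = 2 * prodSum m (Fin.init σ) (Fin.init τ)
      + nbrSum m (Fin.init σ) (Fin.init τ)
      + (lin m (Fin.init τ) - lin m (Fin.init σ)) / 2 - (2 * 4 ^ m + 1) / 12 := by
  have row (f g : ℕ → ℝ) (u v : ℝ) (n : ℕ) :
      ∑ c ∈ range n, (f c * g c + (f (c + 1) + u) * (g c - u)
          + (f c * g c + (f c + v) * (g (c + 1) - v)))
        = 2 * ∑ c ∈ range n, f c * g c + ∑ c ∈ range n, (f (c + 1) * g c + f c * g (c + 1))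
          + (u + v) * (∑ c ∈ range n, g c - ∑ c ∈ range n, f c) - n * (u ^ 2 + v ^ 2)
          - u * (f n - f 0) + v * (g n - g 0) := by
    induction n with
    | zero => simp
    | succ n ih =>
      simp only [Finset.sum_range_succ]; push_cast; linear_combination ih
  rw [← sum_corrections, prodSum, grid_succ, prodSum, nbrSum, lin, lin,
    ← Finset.sum_sub_distrib, Finset.sum_div, Finset.mul_sum, ← Finset.sum_add_distrib,
    ← Finset.sum_add_distrib, ← Finset.sum_sub_distrib]
  refine Finset.sum_congr rfl fun a ha => ?_
  have ha := Finset.mem_range.1 ha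
  have := row (dsc m (Fin.init σ) a) (dsc m (Fin.init τ) a) (a / 2 ^ (m + 1))
    (1 / 2 - a / 2 ^ (m + 1)) (2 ^ m)
  simp only [dsc_full_right _ _ _ ha.le, dsc_zero_right] at this
  push_cast at this
  refine Eq.trans (Finset.sum_congr rfl fun c hc => ?_) (this.trans (by ring))
  have hc := Finset.mem_range.1 hc
  rw [dsc_lo_even m σ a c ha, dsc_hi_even m σ a c hc.le, dsc_lo_odd_false m σ a c ha hσ,
    dsc_hi_odd_false m σ a c hc hσ, dsc_lo_even m τ a c ha, dsc_hi_even m τ a c hc.le,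
    dsc_lo_odd_true m τ a c ha hτ, dsc_hi_odd_true m τ a c hc hτ]

lemma nbrSum_succ (m : ℕ) (σ τ : Fin (m + 1) → Bool) (hσ : σ (Fin.last m) = false)
    (hτ : τ (Fin.last m) = true) :
    nbrSum (m + 1) σ τ = 2 * nbrSum m (Fin.init σ) (Fin.init τ)
      + 4 * prodSum m (Fin.init σ) (Fin.init τ)
      + (lin m (Fin.init τ) - lin m (Fin.init σ)) := by
  have row (f g : ℕ → ℝ) (u v : ℝ) (n : ℕ) :
      ∑ c ∈ range n,
          ((f (c + 1) + u) * g c + f c * (g c - u)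
            + (f (c + 1) * (g c - u) + (f (c + 1) + u) * g (c + 1))
          + ((f c + v) * g c + f c * (g (c + 1) - v)
            + (f (c + 1) * (g (c + 1) - v) + (f c + v) * g (c + 1))))
        = 2 * ∑ c ∈ range n, (f (c + 1) * g c + f c * g (c + 1)) + 4 * ∑ c ∈ range n, f c * g c
          + 2 * (u + v) * (∑ c ∈ range n, g c - ∑ c ∈ range n, f c)
          + 2 * (f n * g n - f 0 * g 0)
          - (u + v) * (f n - f 0) + (u + v) * (g n - g 0) := by
    induction n with
    | zero => simp
    | succ n ih =>
      simp only [Finset.sum_range_succ]; linear_combination ih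
  rw [nbrSum, grid_succ, prodSum, nbrSum, lin, lin,
    ← Finset.sum_sub_distrib, Finset.mul_sum, Finset.mul_sum, ← Finset.sum_add_distrib,
    ← Finset.sum_add_distrib]
  refine Finset.sum_congr rfl fun a ha => ?_
  have ha := Finset.mem_range.1 ha
  have := row (dsc m (Fin.init σ) a) (dsc m (Fin.init τ) a) (a / 2 ^ (m + 1))
    (1 / 2 - a / 2 ^ (m + 1)) (2 ^ m)
  simp only [dsc_full_right _ _ _ ha.le, dsc_zero_right] at this
  refine Eq.trans (Finset.sum_congr rfl fun c hc => ?_) (this.trans (by ring))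
  have hc := Finset.mem_range.1 hc
  have e : 2 * c + 1 + 1 = 2 * (c + 1) := by ring
  rw [e, dsc_lo_even m σ a c ha, dsc_hi_even m σ a c hc.le, dsc_lo_odd_false m σ a c ha hσ,
    dsc_hi_odd_false m σ a c hc hσ, dsc_lo_even m τ a c ha, dsc_hi_even m τ a c hc.le,
    dsc_lo_odd_true m τ a c ha hτ, dsc_hi_odd_true m τ a c hc hτ,
    dsc_lo_even m σ a (c + 1) ha, dsc_hi_even m σ a (c + 1) hc,
    dsc_lo_even m τ a (c + 1) ha, dsc_hi_even m τ a (c + 1) hc]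

/-! ### Solving the recursion -/

/-- The number of zeros minus the number of ones of `σ`. -/
noncomputable def imb (m : ℕ) (σ : Fin m → Bool) : ℝ := ∑ i, if σ i then (-1 : ℝ) else 1

lemma imb_succ (m : ℕ) (σ : Fin (m + 1) → Bool) :
    imb (m + 1) σ = imb m (Fin.init σ) + if σ (Fin.last m) then (-1 : ℝ) else 1 := by
  simp only [imb, Fin.sum_univ_castSucc]; rfl

lemma imb_compl (m : ℕ) (σ : Fin m → Bool) : imb m (fun i => !σ i) = -imb m σ := by
  rw [imb, imb, ← Finset.sum_neg_distrib]
  refine Finset.sum_congr rfl fun i _ => ?_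
  cases σ i <;> simp

lemma imb_eq (m : ℕ) (σ : Fin m → Bool) :
    imb m σ = 2 * ((univ.filter (fun i => σ i = false)).card : ℝ) - m := by
  have h : (m : ℝ) = ∑ _i : Fin m, (1 : ℝ) := by simp
  rw [h, imb, Finset.card_filter, Nat.cast_sum, Finset.mul_sum, ← Finset.sum_sub_distrib]
  refine Finset.sum_congr rfl fun i _ => ?_
  cases σ i <;> norm_num

lemma lin_eq (m : ℕ) (σ : Fin m → Bool) : lin m σ = 4 ^ m * imb m σ / 8 := by
  induction m with
  | zero => simp [lin, imb, dsc_zero_left]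
  | succ m ih =>
    cases h : σ (Fin.last m)
    · rw [lin_succ_false m σ h, ih, imb_succ, h]; simp; ring
    · rw [lin_succ_true m σ h, ih, imb_succ, h]; simp; ring

/-- The recursions for complementary shifts, in a form that covers both values of the last digit:
the sign `ε` is `1` when that digit is `0`, and `-1` otherwise. -/
lemma step (m : ℕ) (σ : Fin (m + 1) → Bool) :
    ∃ ε : ℝ, ε ^ 2 = 1 ∧ imb (m + 1) σ = imb m (Fin.init σ) + ε ∧
      prodSum (m + 1) σ (fun i => !σ i)
        = 2 * prodSum m (Fin.init σ) (fun i => !(Fin.init σ : Fin m → Bool) i)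
          + nbrSum m (Fin.init σ) (fun i => !(Fin.init σ : Fin m → Bool) i)
          - ε * (4 ^ m * imb m (Fin.init σ) / 8) - (2 * 4 ^ m + 1) / 12 ∧
      nbrSum (m + 1) σ (fun i => !σ i)
        = 2 * prodSum (m + 1) σ (fun i => !σ i) + (2 * 4 ^ m + 1) / 6 := by
  have e : (Fin.init (fun i => !σ i) : Fin m → Bool) = fun i => !(Fin.init σ : Fin m → Bool) i :=
    rfl
  have hl := lin_eq m (Fin.init σ)
  have hl' := lin_eq m (fun i => !(Fin.init σ : Fin m → Bool) i)
  rw [imb_compl] at hl'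
  cases h : σ (Fin.last m)
  · have h1 := prodSum_succ m σ (fun i => !σ i) h (by simp [h])
    have h2 := nbrSum_succ m σ (fun i => !σ i) h (by simp [h])
    rw [e, hl, hl'] at h1 h2
    refine ⟨1, by norm_num, by rw [imb_succ, h]; simp, ?_, ?_⟩
    · rw [h1]; ring
    · rw [h1, h2]; ring
  · have h1 := prodSum_succ m (fun i => !σ i) σ (by simp [h]) h
    have h2 := nbrSum_succ m (fun i => !σ i) σ (by simp [h]) h
    rw [e, hl, hl', prodSum_comm, prodSum_comm m, nbrSum_comm m] at h1
    rw [e, hl, hl', nbrSum_comm, prodSum_comm m, nbrSum_comm m] at h2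
    refine ⟨-1, by norm_num, by rw [imb_succ, h]; simp, ?_, ?_⟩
    · rw [h1]; ring
    · rw [h1, h2]; ring

/-- The closed form of the sum of products. At level `0` the sum is `0` but the formula gives
`-1 / 16`, so the induction starts at level `1`. -/
lemma prodSum_compl (m : ℕ) (σ : Fin (m + 1) → Bool) :
    prodSum (m + 1) σ (fun i => !σ i)
      = -4 ^ (m + 1) * (imb (m + 1) σ ^ 2 / 64 + ((m + 1 : ℕ) : ℝ) / 192 + 5 / 144) - 1 / 36 := by
  induction m with
  | zero =>
    obtain ⟨ε, hε, h1, h2, -⟩ := step 0 σ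
    have i0 : imb 0 (Fin.init σ) = 0 := by simp [imb]
    have p0 : prodSum 0 (Fin.init σ) (fun i => !(Fin.init σ : Fin 0 → Bool) i) = 0 := by
      simp [prodSum, dsc_zero_left]
    have n0 : nbrSum 0 (Fin.init σ) (fun i => !(Fin.init σ : Fin 0 → Bool) i) = 0 := by
      simp [nbrSum, dsc_zero_left]
    rw [h2, h1, i0, p0, n0]
    push_cast
    linear_combination (1 / 16) * hε
  | succ m ih =>
    obtain ⟨ε, hε, h1, h2, -⟩ := step (m + 1) σ
    obtain ⟨-, -, -, -, h3⟩ := step m (Fin.init σ)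
    rw [h2, h1, h3, ih]
    push_cast
    rw [pow_succ (4 : ℝ) (m + 1), pow_succ (4 : ℝ) m]
    linear_combination (4 ^ m / 4) * hε

theorem stmt8 (m : ℕ) (hm : 1 ≤ m) (σ : Fin m → Bool)
    (l : ℕ) (hl : l = (Finset.univ.filter (fun i => σ i = false)).card) :
    (1 / 2 ^ (2 * m) : ℝ) *
      ∑ j ∈ Finset.Ioo (0:ℕ) (2 ^ m), ∑ k ∈ Finset.Ioo (0:ℕ) (2 ^ m),
        Δham m σ ((j : ℝ) / 2 ^ m) ((k : ℝ) / 2 ^ m)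
          * Δham m (fun i => !(σ i)) ((j : ℝ) / 2 ^ m) ((k : ℝ) / 2 ^ m)
      = -(m : ℝ) ^ 2 / 64 - (l : ℝ) ^ 2 / 16 + (l : ℝ) * m / 16 - (m : ℝ) / 192
          - 5 / 144 - 1 / (9 * 2 ^ (2 * m + 2)) := by
  subst hl
  have hS : ∑ j ∈ Finset.Ioo (0:ℕ) (2 ^ m), ∑ k ∈ Finset.Ioo (0:ℕ) (2 ^ m),
        Δham m σ ((j : ℝ) / 2 ^ m) ((k : ℝ) / 2 ^ m)
          * Δham m (fun i => !(σ i)) ((j : ℝ) / 2 ^ m) ((k : ℝ) / 2 ^ m)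
      = prodSum m σ (fun i => !σ i) := by
    simp only [Δham_eq]
    have hsub : Finset.Ioo 0 (2 ^ m) ⊆ range (2 ^ m) := fun x hx => by
      simp at hx ⊢; exact hx.2
    -- The terms with `j = 0` or `k = 0` vanish, so the sums may include them.
    have hz : ∀ x ∈ range (2 ^ m), x ∉ Finset.Ioo 0 (2 ^ m) → x = 0 := fun x hx hx' => by
      simp at hx hx'; by_contra h; have := hx' (Nat.pos_of_ne_zero h); omega
    rw [prodSum]
    refine (Finset.sum_congr rfl fun a _ => Finset.sum_subset hsub fun x hx hx' => ?_).trans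
      (Finset.sum_subset hsub fun x hx hx' => ?_)
    · rw [hz x hx hx', dsc_zero_right, zero_mul]
    · simp [hz x hx hx', dsc_zero_left]
  rw [hS]
  have hi := imb_eq m σ
  obtain ⟨n, rfl⟩ : ∃ n, m = n + 1 := ⟨m - 1, by omega⟩
  rw [prodSum_compl, hi]
  generalize ((univ.filter (fun i => σ i = false)).card : ℝ) = l
  rw [pow_add (2 : ℝ) (2 * (n + 1)) 2, pow_mul, show (2 : ℝ) ^ 2 = 4 by norm_num]
  field_simp
  ring
end
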